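/- Let B1 be any schedule containing an atomic mini-batch (f,f). If Inequality (2) holds for f with respect to B1, then v(B1 ∖ {(f,f)}) < v(B1). -/

import Mathlib

/-!
Write `B' = B \ {(f, f)}`. Every file `g ≠ f` is covered by the same mini-batches of `B` and of
`B'`, so its response time does not increase (`resp_erase_le`). Moreover it drops by at least
`2 s(f)` when `g` lies to the left of `f`, because every traversal of `g` then happens after the
detour for `(f, f)`, and when `g` is covered by no mini-batch at all, because `g` is then only
read in Phase 2 (`resp_erase_add_le`). The total gain is thus at least twice the right-hand side
of `Ineq2`.

The response time of `f` itself grows by at most `2 (l(f) + ∑_{r(b) < l(f)} s(b))`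
(`resp_erase_self_le`): after the slot of the removed detour, the head descends by at most `l(f)`
blocks and comes back before it reads `f` again, and until the next mini-batch covering `f` (or
Phase 2) it only executes mini-batches that lie entirely to the left of `f`. The total loss is at
most twice the left-hand side of `Ineq2`.
-/

open Finset

namespace LTSP

variable (N : ℕ) (s : Fin N → ℕ) (n : Fin N → ℕ)

/-- Left edge (0-based coordinate) of file `f`: file `f` occupies the blocks
`leftPos f + 1, …, leftPos f + s f` of the tape. -/
def leftPos (f : Fin N) : ℕ := ∑ j ∈ Finset.Iio f, s j

/-- Leftmost block of file `f`: `l(f) = 1 + ∑_{j<f} s j`. -/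
def lB (f : Fin N) : ℕ := 1 + leftPos N s f

/-- Tape length `m = ∑ s f`. -/
def tapeLen : ℕ := ∑ j, s j

/-- Left edge `l(b)` (0-based coordinate) of a mini-batch `b = (b.1, b.2)`. -/
def Lb (b : Fin N × Fin N) : ℕ := leftPos N s b.1

/-- Right edge of a mini-batch; numerically this equals its rightmost block `r(b)`. -/
def Rb (b : Fin N × Fin N) : ℕ := leftPos N s b.2 + s b.2

/-- Size of a mini-batch: `s(b) = r(b) - l(b) + 1`. -/
def sb (b : Fin N × Fin N) : ℕ := Rb N s b - Lb N s b

/-- `f ∈ F(b)` : file `f` is contained in the mini-batch `b`. -/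
def Covers (b : Fin N × Fin N) (f : Fin N) : Prop := b.1 ≤ f ∧ f ≤ b.2

/-- `f ∈ F(B)` : file `f` is traversed by some mini-batch of the schedule `B`. -/
def InF (B : Finset (Fin N × Fin N)) (f : Fin N) : Prop := ∃ b ∈ B, Covers N b f

/-- A schedule is a finite set of mini-batches, i.e. pairs `(f, f')` with `f ≤ f'`. -/
def Valid (B : Finset (Fin N × Fin N)) : Prop := ∀ b ∈ B, b.1 ≤ b.2

/-- `b'` is executed strictly before `b`: mini-batches are executed in decreasing order
of their leftmost blocks, ties broken by executing larger mini-batches first. -/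
def ExecBefore (b' b : Fin N × Fin N) : Prop :=
  Lb N s b < Lb N s b' ∨ (Lb N s b' = Lb N s b ∧ Rb N s b < Rb N s b')

open scoped Classical in
/-- Time step at which the read movement of mini-batch `b ∈ B` begins: the head starts at
position `m` at time `0`, moves left one block per time step, and detours `2 s(b')` time
steps for every mini-batch `b'` executed before `b`. -/
noncomputable def startTime (B : Finset (Fin N × Fin N)) (b : Fin N × Fin N) : ℕ :=
  (tapeLen N s - Lb N s b) + 2 * ∑ b' ∈ B.filter (fun b' => ExecBefore N s b' b), sb N s b'

/-- Time step at which the left-to-right traversal of file `f` within the read movement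
of mini-batch `b` begins. -/
noncomputable def travTime (B : Finset (Fin N × Fin N)) (f : Fin N) (b : Fin N × Fin N) : ℕ :=
  startTime N s B b + (leftPos N s f - Lb N s b)

/-- Time step at which Phase 2 begins (the head has descended the whole tape, detouring
`2 s(b)` time steps for each executed mini-batch). -/
noncomputable def phase2Start (B : Finset (Fin N × Fin N)) : ℕ :=
  tapeLen N s + 2 * ∑ b ∈ B, sb N s b

open scoped Classical in
/-- Response time of the requests of file `f` under schedule `B`: the time step at which the
first complete left-to-right traversal of `f` begins (within the first mini-batch of `B`
containing `f` if one exists, and during Phase 2 otherwise). -/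
noncomputable def resp (B : Finset (Fin N × Fin N)) (f : Fin N) : ℕ :=
  if h : (B.filter (fun b => Covers N b f)).Nonempty then
    (B.filter (fun b => Covers N b f)).inf' h (travTime N s B f)
  else phase2Start N s B + leftPos N s f

/-- Objective value of a schedule: the sum of the response times of all requests
(file `f` contributes `n f` times its response time). -/
noncomputable def v (B : Finset (Fin N × Fin N)) : ℕ :=
  ∑ f, n f * resp N s B f

/-- A schedule is optimal if its objective value is minimum among all schedules. -/
def Optimal (B : Finset (Fin N × Fin N)) : Prop :=
  Valid N B ∧ ∀ B' : Finset (Fin N × Fin N), Valid N B' → v N s n B ≤ v N s n B'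

open scoped Classical in
/-- Left-hand side of Inequalities (1)/(2): `n(f)·(l(f) + ∑_{b ∈ B, r(b) < l(f)} s(b))`. -/
noncomputable def ineqLHS (B : Finset (Fin N × Fin N)) (f : Fin N) : ℕ :=
  n f * (lB N s f + ∑ b ∈ B.filter (fun b => Rb N s b < lB N s f), sb N s b)

open scoped Classical in
/-- Right-hand side of Inequalities (1)/(2):
`s(f)·(∑_{f', l(f') < l(f)} n(f') + ∑_{f' ∉ F(B), l(f') > l(f)} n(f'))`. -/
noncomputable def ineqRHS (B : Finset (Fin N × Fin N)) (f : Fin N) : ℕ :=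
  s f * ((∑ f' ∈ Finset.univ.filter (fun f' => lB N s f' < lB N s f), n f') +
    ∑ f' ∈ Finset.univ.filter (fun f' => ¬ InF N B f' ∧ lB N s f < lB N s f'), n f')

/-- Inequality (1). -/
def Ineq1 (B : Finset (Fin N × Fin N)) (f : Fin N) : Prop :=
  ineqRHS N s n B f < ineqLHS N s n B f

/-- Inequality (2). -/
def Ineq2 (B : Finset (Fin N × Fin N)) (f : Fin N) : Prop :=
  ineqLHS N s n B f < ineqRHS N s n B f

/-- The Greedy Strategy schedule: one atomic mini-batch `(f, f)` for every file with at
least one request, except the leftmost file of the tape. -/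
def GS (hN : 0 < N) : Finset (Fin N × Fin N) :=
  (Finset.univ.filter (fun f : Fin N => 0 < n f ∧ f ≠ ⟨0, hN⟩)).image (fun f => (f, f))

theorem leftPos_add_le {f g : Fin N} (h : f < g) : leftPos N s f + s f ≤ leftPos N s g := by
  unfold leftPos
  rw [add_comm, ← Finset.sum_insert (by simp : f ∉ Finset.Iio f)]
  apply Finset.sum_le_sum_of_subset
  intro x hx
  simp only [Finset.mem_insert, Finset.mem_Iio] at hx ⊢
  rcases hx with rfl | hx
  · exact h
  · exact hx.trans h

theorem leftPos_mono {f g : Fin N} (h : f ≤ g) : leftPos N s f ≤ leftPos N s g :=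
  Finset.sum_le_sum_of_subset (Finset.Iio_subset_Iio h)

theorem leftPos_lt_iff (hs : ∀ f, 1 ≤ s f) {f g : Fin N} :
    leftPos N s f < leftPos N s g ↔ f < g := by
  constructor
  · intro h
    by_contra! h'
    have := leftPos_mono N s h'
    omega
  · intro h
    have := leftPos_add_le N s h
    have := hs f
    omega

theorem leftPos_le_tapeLen (f : Fin N) : leftPos N s f ≤ tapeLen N s :=
  Finset.sum_le_sum_of_subset (Finset.subset_univ _)

theorem sb_atomic (f : Fin N) : sb N s (f, f) = s f := by
  simp [sb, Rb, Lb]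

theorem startTime_erase_le (B : Finset (Fin N × Fin N)) (a b : Fin N × Fin N) :
    startTime N s (B.erase a) b ≤ startTime N s B b := by
  classical
  unfold startTime
  gcongr
  exact Finset.erase_subset _ _

theorem startTime_erase_add (B : Finset (Fin N × Fin N)) {a b : Fin N × Fin N} (ha : a ∈ B)
    (hab : ExecBefore N s a b) :
    startTime N s (B.erase a) b + 2 * sb N s a = startTime N s B b := by
  classical
  unfold startTime
  rw [Finset.filter_erase]
  have := Finset.sum_erase_add (B.filter (fun b' => ExecBefore N s b' b)) (sb N s) (a := a)
    (by simp [ha, hab])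
  omega

open scoped Classical in
theorem filter_covers_erase (B : Finset (Fin N × Fin N)) {f g : Fin N} (h : g ≠ f) :
    (B.erase (f, f)).filter (fun b => Covers N b g) = B.filter (fun b => Covers N b g) := by
  rw [Finset.filter_erase]
  apply Finset.erase_eq_of_notMem
  intro hm
  obtain ⟨_, h1, h2⟩ := Finset.mem_filter.1 hm
  exact h (le_antisymm h2 h1)

theorem resp_erase_le (B : Finset (Fin N × Fin N)) {f g : Fin N} (h : g ≠ f) :
    resp N s (B.erase (f, f)) g ≤ resp N s B g := by
  classical
  unfold resp
  rw [filter_covers_erase N B h]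
  split_ifs with hne
  · apply Finset.le_inf'
    intro b hb
    refine (Finset.inf'_le _ hb).trans ?_
    unfold travTime
    have := startTime_erase_le N s B (f, f) b
    omega
  · unfold phase2Start
    gcongr
    exact Finset.erase_subset _ _

/-- All traversals of `g` take place after the detour for `(f, f)`, so that removing this detour
saves `2 s(f)` time steps. -/
theorem resp_erase_add_le (hs : ∀ f, 1 ≤ s f) (B : Finset (Fin N × Fin N)) {f g : Fin N}
    (hf : (f, f) ∈ B) (h : g < f ∨ ¬ InF N B g ∧ f < g) :
    resp N s (B.erase (f, f)) g + 2 * s f ≤ resp N s B g := by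
  classical
  have hne : g ≠ f := by
    rcases h with h | h
    · exact h.ne
    · exact h.2.ne'
  unfold resp
  rw [filter_covers_erase N B hne]
  split_ifs with hcov
  · obtain ⟨b, hb, hmin⟩ := Finset.exists_mem_eq_inf' hcov (travTime N s B g)
    rw [hmin]
    refine (Nat.add_le_add_right (Finset.inf'_le _ hb) _).trans ?_
    obtain ⟨hbB, hbg⟩ := Finset.mem_filter.1 hb
    have hgf : g < f := h.resolve_right fun h' => h'.1 ⟨b, hbB, hbg⟩
    have hex : ExecBefore N s (f, f) b :=
      Or.inl ((leftPos_lt_iff N s hs).2 (hbg.1.trans_lt hgf))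
    have := startTime_erase_add N s B hf hex
    rw [sb_atomic] at this
    unfold travTime
    omega
  · have := Finset.sum_erase_add B (sb N s) hf
    rw [sb_atomic] at this
    unfold phase2Start
    omega

/-- A mini-batch that is neither executed before `(f, f)` nor covers `f` lies
entirely to the left of `f`. -/
theorem Rb_lt_of_not_execBefore (hs : ∀ f, 1 ≤ s f) {b : Fin N × Fin N} {f : Fin N}
    (h : ¬ ExecBefore N s b (f, f)) (hc : ¬ Covers N b f) :
    Rb N s b < lB N s f := by
  have h1 : b.1 ≤ f := by
    by_contra! h1
    exact h (Or.inl ((leftPos_lt_iff N s hs).2 h1))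
  have h2 : b.2 < f := by
    by_contra! h2
    exact hc ⟨h1, h2⟩
  have := leftPos_add_le N s h2
  unfold Rb lB
  omega

/-- If every mini-batch of `C` is executed before `(f, f)` or avoids `f`, the detours of `C` are
accounted for by those executed before `(f, f)` and those lying to the left of `f`. -/
theorem sum_sb_le (hs : ∀ f, 1 ≤ s f) (B C : Finset (Fin N × Fin N))
    (f : Fin N) (hCB : C ⊆ B) (hC : ∀ b ∈ C, ExecBefore N s b (f, f) ∨ ¬ Covers N b f)
    [DecidablePred fun b' => ExecBefore N s b' (f, f)] :
    ∑ b ∈ C, sb N s b ≤ ∑ b ∈ B.filter (fun b' => ExecBefore N s b' (f, f)), sb N s b +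
      ∑ b ∈ B.filter (fun b => Rb N s b < lB N s f), sb N s b := by
  rw [← Finset.sum_union_inter]
  refine le_trans (Finset.sum_le_sum_of_subset ?_) (Nat.le_add_right _ _)
  intro b hb
  rw [Finset.mem_union, Finset.mem_filter, Finset.mem_filter]
  by_cases hex : ExecBefore N s b (f, f)
  · exact Or.inl ⟨hCB hb, hex⟩
  · exact Or.inr ⟨hCB hb, Rb_lt_of_not_execBefore N s hs hex
      ((hC b hb).resolve_left hex)⟩

/-- Without the atomic mini-batch `(f, f)`, the file `f` is read at most
`2 (l(f) + ∑_{r(b) < l(f)} s(b))` time steps after the traversal within `(f, f)`. -/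
theorem resp_erase_self_le_travTime (hs : ∀ f, 1 ≤ s f) (B : Finset (Fin N × Fin N))
    (f : Fin N) :
    resp N s (B.erase (f, f)) f ≤ travTime N s B f (f, f) +
      2 * (lB N s f + ∑ b ∈ B.filter (fun b => Rb N s b < lB N s f), sb N s b) := by
  classical
  have hL := leftPos_le_tapeLen N s f
  unfold resp
  split_ifs with hcov
  · -- The first executed mini-batch of the reduced schedule that covers `f`.
    obtain ⟨b, hb, hmax⟩ := Finset.exists_max_image _
      (fun b => toLex (Lb N s b, Rb N s b)) hcov
    refine (Finset.inf'_le _ hb).trans ?_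
    obtain ⟨hbB, hbf⟩ := Finset.mem_filter.1 hb
    have hlb : Lb N s b ≤ leftPos N s f := leftPos_mono N s hbf.1
    have hsum := sum_sb_le N s hs B
      ((B.erase (f, f)).filter (fun b' => ExecBefore N s b' b)) f
      ((Finset.filter_subset _ _).trans (Finset.erase_subset _ _)) (by
        intro c hc
        obtain ⟨hcB, hcb⟩ := Finset.mem_filter.1 hc
        refine Or.inr fun hcf => ?_
        have := hmax c (Finset.mem_filter.2 ⟨hcB, hcf⟩)
        rw [Prod.Lex.toLex_le_toLex] at this
        unfold ExecBefore at hcb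
        dsimp only at this
        omega)
    have hLf : Lb N s (f, f) = leftPos N s f := rfl
    unfold travTime startTime
    rw [hLf]
    unfold lB at *
    omega
  · have hsum := sum_sb_le N s hs B (B.erase (f, f)) f (Finset.erase_subset _ _) (by
      intro c hc
      exact Or.inr fun hcf => hcov ⟨c, Finset.mem_filter.2 ⟨hc, hcf⟩⟩)
    have hLf : Lb N s (f, f) = leftPos N s f := rfl
    unfold travTime startTime phase2Start
    rw [hLf]
    unfold lB at *
    omega

theorem resp_erase_self_le (hs : ∀ f, 1 ≤ s f) (B : Finset (Fin N × Fin N))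
    (f : Fin N) (hf : (f, f) ∈ B) :
    resp N s (B.erase (f, f)) f ≤ resp N s B f +
      2 * (lB N s f + ∑ b ∈ B.filter (fun b => Rb N s b < lB N s f), sb N s b) := by
  classical
  have hcov : (B.filter (fun b => Covers N b f)).Nonempty :=
    ⟨(f, f), Finset.mem_filter.2 ⟨hf, le_rfl, le_rfl⟩⟩
  obtain ⟨b, hb, hmin⟩ := Finset.exists_mem_eq_inf' hcov (travTime N s B f)
  have hresp : resp N s B f = travTime N s B f b := by
    unfold resp
    rw [dif_pos hcov, hmin]
  rw [hresp]
  by_cases hbf : b = (f, f)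
  · subst hbf
    exact resp_erase_self_le_travTime N s hs B f
  · -- The first traversal of `f` is not the one within `(f, f)`, so it is still available.
    have hb' : b ∈ (B.erase (f, f)).filter (fun b => Covers N b f) := by
      rw [Finset.filter_erase]
      exact Finset.mem_erase.2 ⟨hbf, hb⟩
    have h1 : resp N s (B.erase (f, f)) f ≤ travTime N s (B.erase (f, f)) f b := by
      unfold resp
      rw [dif_pos ⟨b, hb'⟩]
      exact Finset.inf'_le _ hb'
    have h2 := startTime_erase_le N s B (f, f) b
    unfold travTime at *
    omega

/-- If the schedule `B1` contains the atomic mini-batch `(f, f)` and Inequality (2) holds for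
`f` with respect to `B1`, then removing `(f, f)` strictly decreases the objective value. -/
theorem stmt7 (hs : ∀ f, 1 ≤ s f) (B1 : Finset (Fin N × Fin N)) (hB : Valid N B1)
    (f : Fin N) (hf : (f, f) ∈ B1) (h2 : Ineq2 N s n B1 f) :
    v N s n (B1.erase (f, f)) < v N s n B1 := by
  classical
  have hlt : ∀ a b : Fin N, lB N s a < lB N s b ↔ a < b := fun a b => by
    rw [← leftPos_lt_iff N s hs]
    unfold lB
    omega
  -- Balance of gain and loss, file by file.
  have key : ∀ g : Fin N, n g * resp N s (B1.erase (f, f)) g +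
      2 * (s f * ((if lB N s g < lB N s f then n g else 0) +
        (if ¬ InF N B1 g ∧ lB N s f < lB N s g then n g else 0))) ≤
      n g * resp N s B1 g + (if g = f then 2 * ineqLHS N s n B1 f else 0) := by
    intro g
    simp only [hlt]
    by_cases hgf : g = f
    · subst hgf
      have := Nat.mul_le_mul_left (n g) (resp_erase_self_le N s hs B1 g hf)
      simp only [lt_irrefl, and_false, if_false, if_true, ineqLHS]
      linarith
    · by_cases h : g < f ∨ ¬ InF N B1 g ∧ f < g
      · have h3 := Nat.mul_le_mul_left (n g) (resp_erase_add_le N s hs B1 hf h)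
        have h4 : (if g < f then n g else 0) +
            (if ¬ InF N B1 g ∧ f < g then n g else 0) = n g := by
          rcases h with h | h
          · simp [h, h.not_gt]
          · simp [h, h.2.not_gt]
        rw [h4, if_neg hgf]
        linarith
      · have h3 := Nat.mul_le_mul_left (n g) (resp_erase_le N s B1 hgf)
        rw [not_or] at h
        rw [if_neg h.1, if_neg h.2, if_neg hgf]
        simpa using h3
  have hsum := Finset.sum_le_sum fun g (_ : g ∈ Finset.univ) => key g
  rw [Finset.sum_add_distrib, Finset.sum_add_distrib, ← Finset.mul_sum, ← Finset.mul_sum,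
    Finset.sum_add_distrib, ← Finset.sum_filter, ← Finset.sum_filter,
    Finset.sum_ite_eq' Finset.univ f, if_pos (Finset.mem_univ f)] at hsum
  unfold Ineq2 at h2
  have hR : ineqRHS N s n B1 f = s f *
      ((∑ g ∈ Finset.univ.filter (fun g => lB N s g < lB N s f), n g) +
        ∑ g ∈ Finset.univ.filter (fun g => ¬ InF N B1 g ∧ lB N s f < lB N s g), n g) := by
    unfold ineqRHS
    congr!
  rw [← hR] at hsum
  unfold v
  omega

end LTSP
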